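/- Let d ≥ 2 be an integer and let x₁,…,x_d be pairwise distinct positive real numbers. With e₁ = x₁+⋯+x_d and q(τ) = ∏_{i=1}^d (τ + x_i), the subentropy satisfies the half-axis integral formula Q(x₁,…,x_d) = ∫₀^∞ [ 1 − τ^d/q(τ) − e₁/(τ+1) ] dτ, where the integral is over τ ∈ (0,∞). -/

import Mathlib

open MeasureTheory Real

/-!
Partial fractions give `1 - τ ^ d / q(τ) = ∑ i, cᵢ / (τ + xᵢ)` with
`cᵢ = xᵢ ^ d / ∏ j ≠ i, (xᵢ - xⱼ)`, and comparing the coefficients of `τ ^ (d - 1)` gives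
`∑ i, cᵢ = e₁`. The integrand is therefore `∑ i, cᵢ * (1 / (τ + xᵢ) - 1 / (τ + 1))`, whose `i`-th
term integrates to `-cᵢ * log xᵢ`.
-/

section PartialFractions

open Polynomial Lagrange Finset

section CommRing

variable {R ι : Type*} [CommRing R] {s : Finset ι} {v : ι → R} {p : R[X]}

lemma nextCoeff_X_pow (n : ℕ) : (X ^ n : R[X]).nextCoeff = 0 := by
  nontriviality R
  rcases n.eq_zero_or_pos with rfl | hn
  · simp [nextCoeff]
  rw [nextCoeff_of_natDegree_pos (by rwa [natDegree_X_pow]), natDegree_X_pow, coeff_X_pow,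
    if_neg (by lia)]

lemma degree_sub_nodal_lt (hp : p.Monic) (hdeg : p.natDegree = #s) :
    (p - nodal s v).degree < #s := by
  nontriviality R
  have hdeg' : p.degree = #s := by rw [degree_eq_natDegree hp.ne_zero, hdeg]
  rw [← hdeg']
  exact degree_sub_lt_left (by rw [hdeg', degree_nodal]) hp.ne_zero
    (by rw [hp.leadingCoeff, nodal_monic.leadingCoeff])

lemma coeff_card_sub_one_sub_nodal (hdeg : p.natDegree = #s) (hs : s.Nonempty) :
    (p - nodal s v).coeff (#s - 1) = p.nextCoeff + ∑ i ∈ s, v i := by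
  rw [coeff_sub, nodal_eq, prod_X_sub_C_coeff_card_pred s v hs.card_pos, sub_neg_eq_add,
    nextCoeff_of_natDegree_pos (hdeg ▸ hs.card_pos), hdeg]

end CommRing

section Field

variable {F ι : Type*} [Field F] [DecidableEq ι] {s : Finset ι} {v : ι → F} {p : F[X]}

lemma sum_nodalWeight_mul_eval (hv : Set.InjOn v s) (hp : p.Monic) (hdeg : p.natDegree = #s) :
    ∑ i ∈ s, nodalWeight s v i * p.eval (v i) = p.nextCoeff + ∑ i ∈ s, v i := by
  rcases s.eq_empty_or_nonempty with rfl | hs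
  · simp [nextCoeff, hdeg]
  rw [← coeff_card_sub_one_sub_nodal hdeg hs, coeff_eq_sum hv (degree_sub_nodal_lt hp hdeg)]
  refine sum_congr rfl fun i hi => ?_
  rw [eval_sub, eval_nodal_at_node hi, sub_zero, nodalWeight, prod_inv_distrib, div_eq_inv_mul]

lemma sum_nodalWeight_mul_pow_card (hv : Set.InjOn v s) :
    ∑ i ∈ s, nodalWeight s v i * v i ^ #s = ∑ i ∈ s, v i := by
  simpa [nextCoeff_X_pow] using
    sum_nodalWeight_mul_eval hv (monic_X_pow #s) (natDegree_X_pow #s)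

lemma eval_div_eval_nodal (hv : Set.InjOn v s) (hp : p.Monic) (hdeg : p.natDegree = #s) {z : F}
    (hz : ∀ i ∈ s, z ≠ v i) :
    p.eval z / (nodal s v).eval z
      = 1 + ∑ i ∈ s, nodalWeight s v i * p.eval (v i) / (z - v i) := by
  have hnodal : (nodal s v).eval z ≠ 0 := eval_nodal_not_at_node hz
  have hinterp : p - nodal s v = interpolate s v (fun i => p.eval (v i)) :=
    eq_interpolate_of_eval_eq _ hv (degree_sub_nodal_lt hp hdeg) fun i hi => by
      rw [eval_sub, eval_nodal_at_node hi, sub_zero]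
  have heval := congrArg (eval z) hinterp
  rw [eval_sub, eval_interpolate_not_at_node _ hz] at heval
  rw [div_eq_iff hnodal, add_mul, one_mul, ← sub_eq_iff_eq_add', heval, mul_comm]
  congr 1
  exact sum_congr rfl fun i _ => by ring

lemma one_sub_pow_card_div_prod_add (hv : Set.InjOn v s) {z : F} (hz : ∀ i ∈ s, z + v i ≠ 0) :
    1 - z ^ #s / ∏ i ∈ s, (z + v i)
      = ∑ i ∈ s, nodalWeight s v i * v i ^ #s / (z + v i) := by
  have hprod : ∏ i ∈ s, (-z - v i) = (-1) ^ #s * ∏ i ∈ s, (z + v i) := by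
    simp only [← neg_add', prod_neg]
  have hratio : (-z) ^ #s / ∏ i ∈ s, (-z - v i) = z ^ #s / ∏ i ∈ s, (z + v i) := by
    rw [hprod, neg_pow, mul_div_mul_left _ _ (pow_ne_zero _ (neg_ne_zero.2 one_ne_zero))]
  have hpartial := eval_div_eval_nodal hv (monic_X_pow #s) (natDegree_X_pow #s) (z := -z)
    fun i hi hzi => hz i hi (by rw [← hzi, add_neg_cancel])
  simp only [eval_pow, eval_X, eval_nodal] at hpartial
  rw [← hratio, hpartial, sub_add_cancel_left, ← sum_neg_distrib]
  exact sum_congr rfl fun i _ => by rw [← neg_add', div_neg, neg_neg]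

end Field

end PartialFractions

section LogIntegral

open Set Filter Topology

variable {a b : ℝ}

lemma hasDerivAt_log_add_sub_log_add {t : ℝ} (ha : t + a ≠ 0) (hb : t + b ≠ 0) :
    HasDerivAt (fun τ => log (τ + a) - log (τ + b)) (1 / (t + a) - 1 / (t + b)) t :=
  (((hasDerivAt_id t).add_const a).log ha).sub (((hasDerivAt_id t).add_const b).log hb)

lemma tendsto_log_add_sub_log_add (a b : ℝ) :
    Tendsto (fun τ => log (τ + a) - log (τ + b)) atTop (𝓝 0) := by
  simpa using (tendsto_log_comp_add_sub_log a).sub (tendsto_log_comp_add_sub_log b)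

lemma integrableOn_one_div_add_sub_one_div_add (ha : 0 < a) (hb : 0 < b) :
    IntegrableOn (fun τ => 1 / (τ + a) - 1 / (τ + b)) (Ioi 0) := by
  wlog hab : a ≤ b generalizing a b
  · simpa only [Pi.neg_def, neg_sub] using (this hb ha (le_of_not_ge hab)).neg
  refine integrableOn_Ioi_deriv_of_nonneg' (fun t (ht : 0 ≤ t) => ?_) (fun t (ht : 0 < t) => ?_)
    (tendsto_log_add_sub_log_add a b)
  · exact hasDerivAt_log_add_sub_log_add (by positivity) (by positivity)
  · exact sub_nonneg.2 (by gcongr)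

lemma integral_one_div_add_sub_one_div_add (ha : 0 < a) (hb : 0 < b) :
    ∫ τ in Ioi (0 : ℝ), (1 / (τ + a) - 1 / (τ + b)) = log b - log a := by
  rw [integral_Ioi_of_hasDerivAt_of_tendsto'
    (fun t (ht : 0 ≤ t) => hasDerivAt_log_add_sub_log_add (by positivity) (by positivity))
    (integrableOn_one_div_add_sub_one_div_add ha hb) (tendsto_log_add_sub_log_add a b)]
  simp only [zero_add, zero_sub, neg_sub]

lemma integral_sum_mul_one_div_add_sub_one_div_add {ι : Type*} {s : Finset ι} {x : ι → ℝ}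
    (c : ι → ℝ) (hx : ∀ i ∈ s, 0 < x i) (hb : 0 < b) :
    ∫ τ in Ioi (0 : ℝ), ∑ i ∈ s, c i * (1 / (τ + x i) - 1 / (τ + b))
      = ∑ i ∈ s, c i * (log b - log (x i)) := by
  rw [integral_finsetSum s fun i hi =>
    (integrableOn_one_div_add_sub_one_div_add (hx i hi) hb).const_mul (c i)]
  refine Finset.sum_congr rfl fun i hi => ?_
  rw [integral_const_mul, integral_one_div_add_sub_one_div_add (hx i hi) hb]

end LogIntegral

/-- **Half-axis formula for the subentropy.**
For `d ≥ 2` and pairwise distinct positive reals `x₁, …, x_d`, with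
`e₁ = Σ xᵢ` and `q(τ) = ∏ (τ + xᵢ)`, the subentropy
`Q(x) = −Σᵢ (xᵢ^d / ∏_{j≠i}(xᵢ−xⱼ)) ln xᵢ` satisfies
`Q(x) = ∫₀^∞ [ 1 − τ^d/q(τ) − e₁/(τ+1) ] dτ`. -/
theorem subentropy_half_axis_formula (d : ℕ) (hd : 2 ≤ d) (x : Fin d → ℝ)
    (hx : ∀ i, 0 < x i) (hdist : ∀ i j, i ≠ j → x i ≠ x j) :
    (-∑ i, (x i ^ d / ∏ j ∈ Finset.univ.erase i, (x i - x j)) * Real.log (x i)) =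
      ∫ τ in Set.Ioi (0 : ℝ),
        (1 - τ ^ d / (∏ i, (τ + x i)) - (∑ i, x i) / (τ + 1)) := by
  set c : Fin d → ℝ := fun i => x i ^ d / ∏ j ∈ Finset.univ.erase i, (x i - x j)
  have hc (i : Fin d) : Lagrange.nodalWeight Finset.univ x i * x i ^ d = c i := by
    rw [Lagrange.nodalWeight, Finset.prod_inv_distrib, ← div_eq_inv_mul]
  have hinj : Function.Injective x := fun i j => not_imp_not.1 (hdist i j)
  have hsum : ∑ i, c i = ∑ i, x i := by
    simpa [hc] using sum_nodalWeight_mul_pow_card (s := Finset.univ) hinj.injOn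
  have hpartial (τ : ℝ) (hτ : 0 < τ) : 1 - τ ^ d / ∏ i, (τ + x i) = ∑ i, c i / (τ + x i) := by
    simpa [hc] using one_sub_pow_card_div_prod_add (s := Finset.univ) hinj.injOn
      fun i _ => (add_pos hτ (hx i)).ne'
  have hintegrand : ∀ τ ∈ Set.Ioi (0 : ℝ),
      1 - τ ^ d / (∏ i, (τ + x i)) - (∑ i, x i) / (τ + 1)
        = ∑ i, c i * (1 / (τ + x i) - 1 / (τ + 1)) := fun τ hτ => by
    simp only [hpartial τ hτ, ← hsum, Finset.sum_div, ← Finset.sum_sub_distrib, mul_sub,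
      mul_one_div]
  rw [setIntegral_congr_fun measurableSet_Ioi hintegrand,
    integral_sum_mul_one_div_add_sub_one_div_add c (fun i _ => hx i) one_pos]
  simp only [log_one, zero_sub, mul_neg, Finset.sum_neg_distrib, c]
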